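/- For an N×N Hermitian matrix D with eigenvalues λ_1, ..., λ_N (orthonormal eigenbasis) and Hermitian A with entries A_{ij}, and f smooth, the second Gâteaux derivative of S(A) = Tr f(D+A) at 0 is S''(0)(A,A) = 2 ∑_{i,j} A_{ij} A_{ji} f[λ_j, λ_i, λ_j] = ∑_{i,j} |A_{ij}|² · f'[λ_i, λ_j], where f'[λ_i, λ_j] is the divided difference of f' ((f'(λ_i) − f'(λ_j))/(λ_i − λ_j), or f''(λ_i) when λ_i = λ_j). -/

import Mathlib

open Matrix MeasureTheory

/-- `Tr f(M)` for a Hermitian matrix `M`: the sum of `f` over the eigenvalues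
of `M` (defined via the spectral theorem; junk value `0` otherwise). -/
noncomputable def trFun {N : Type*} [Fintype N] [DecidableEq N]
    (f : ℝ → ℝ) (M : Matrix N N ℂ) : ℝ :=
  if h : M.IsHermitian then ∑ i, f (h.eigenvalues i) else 0

/-- The divided difference `f[x₀,…,xₙ]`, defined for `Cⁿ` functions (and
arbitrary, possibly coinciding, points) via Hermite's integral representation
`f[x₀,…,xₙ] = ∫_{Δₙ} f⁽ⁿ⁾(s₀x₀ + ⋯ + sₙxₙ) dⁿs`; it agrees with the usual
recursive definition on distinct points and extends it continuously. -/
noncomputable def divDiff {E : Type*} [NormedAddCommGroup E] [NormedSpace ℝ E]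
    (f : ℝ → E) (n : ℕ) (x : Fin (n + 1) → ℝ) : E :=
  ∫ s in {s : Fin n → ℝ | (∀ i, 0 ≤ s i) ∧ ∑ i, s i ≤ 1},
    iteratedDeriv n f ((1 - ∑ i, s i) * x 0 + ∑ i : Fin n, s i * x i.succ)

/-!
If `T w = m • w` and `h = dslope f m`, then `f x - f m = h x * (x - m)` gives
`(f(S) - f(T)) w = h(S) (S - T) w` for every self-adjoint `S`. As `h` is continuous, so is
`S ↦ h(S)`, and letting `S → T` along a path with velocity `A` differentiates `f(S) w` to
`h(T) A w`. In an eigenbasis of `T` this is the Daletskii–Krein formula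
`Tr (B f(S))' = ∑ᵢⱼ Bᵢⱼ Aⱼᵢ f[λᵢ, λⱼ]`. With `B = 1` it says `(Tr f(S))' = Tr (A f'(S))`, and
with `B = A` and `f'` in place of `f` it then computes the second derivative of the trace.
The second-order divided differences enter through `f[b, a, b] + f[a, b, a] = f'[a, b]`,
the symmetry of `|Aᵢⱼ|²` allowing one to exchange `i` and `j` in the double sum.
-/

section DividedDifferences

lemma dslope_comm {𝕜 E : Type*} [NontriviallyNormedField 𝕜] [NormedAddCommGroup E]
    [NormedSpace 𝕜 E] (f : 𝕜 → E) (a b : 𝕜) :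
    dslope f a b = dslope f b a := by
  obtain rfl | h := eq_or_ne b a
  · rfl
  · rw [dslope_of_ne f h, dslope_of_ne f h.symm, slope_comm]

lemma dslope_eq_ite {𝕜 : Type*} [NontriviallyNormedField 𝕜] [DecidableEq 𝕜] (f : 𝕜 → 𝕜)
    (a b : 𝕜) : dslope f a b = if a = b then deriv f a else (f a - f b) / (a - b) := by
  split_ifs with h
  · rw [h, dslope_same]
  · rw [dslope_comm, dslope_of_ne f h, slope_def_field]

lemma continuous_dslope {𝕜 E : Type*} [NontriviallyNormedField 𝕜] [NormedAddCommGroup E]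
    [NormedSpace 𝕜 E] {f : 𝕜 → E} {a : 𝕜} (hf : Continuous f) (hfa : DifferentiableAt 𝕜 f a) :
    Continuous (dslope f a) :=
  continuousOn_univ.1 <| (continuousOn_dslope Filter.univ_mem).2 ⟨hf.continuousOn, hfa⟩

variable {E : Type*} [NormedAddCommGroup E] [NormedSpace ℝ E] [CompleteSpace E]

lemma setIntegral_comp_fst {α β : Type*} [MeasurableSpace α] [MeasurableSpace β] {μ : Measure α}
    {ν : Measure β} [SFinite μ] [SFinite ν] {s : Set (α × β)} (hs : MeasurableSet s) {g : α → E}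
    (hg : IntegrableOn (fun p => g p.1) s (μ.prod ν)) :
    ∫ p in s, g p.1 ∂μ.prod ν = ∫ x, ν.real (Prod.mk x ⁻¹' s) • g x ∂μ := by
  rw [← integral_indicator hs, integral_prod _ (hg.integrable_indicator hs)]
  refine integral_congr_ae (.of_forall fun x => ?_)
  exact (integral_indicator (measurable_prodMk_left hs)).trans (setIntegral_const (g x))

lemma setIntegral_triangle_comp_fst {g : ℝ → E} (hg : ContinuousOn g (Set.Icc 0 1)) :
    ∫ p in {p : ℝ × ℝ | 0 ≤ p.1 ∧ 0 ≤ p.2 ∧ p.1 + p.2 ≤ 1}, g p.1 =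
      ∫ t in (0 : ℝ)..1, (1 - t) • g t := by
  set s := {p : ℝ × ℝ | 0 ≤ p.1 ∧ 0 ≤ p.2 ∧ p.1 + p.2 ≤ 1}
  have hs_closed : IsClosed s :=
    (isClosed_le continuous_const continuous_fst).inter
      ((isClosed_le continuous_const continuous_snd).inter
        (isClosed_le (continuous_fst.add continuous_snd) continuous_const))
  have hs_subset : s ⊆ Set.Icc 0 1 ×ˢ Set.Icc 0 1 := fun p ⟨h₁, h₂, h₃⟩ =>
    ⟨⟨h₁, by linarith⟩, h₂, by linarith⟩
  have hg_int : IntegrableOn (fun p : ℝ × ℝ => g p.1) s :=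
    (hg.comp continuous_fst.continuousOn fun p hp => (hs_subset hp).1).integrableOn_compact
      ((isCompact_Icc.prod isCompact_Icc).of_isClosed_subset hs_closed hs_subset)
  have h_slice (x : ℝ) : volume.real (Prod.mk x ⁻¹' s) • g x =
      (Set.Icc (0 : ℝ) 1).indicator (fun t => (1 - t) • g t) x := by
    by_cases hx : x ∈ Set.Icc (0 : ℝ) 1
    · have : Prod.mk x ⁻¹' s = Set.Icc 0 (1 - x) := by
        ext y
        simp only [s, Set.mem_preimage, Set.mem_ofPred_eq, hx.1, true_and, Set.mem_Icc,
          le_sub_iff_add_le']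
      rw [this, Real.volume_real_Icc_of_le (sub_nonneg.2 hx.2), sub_zero,
        Set.indicator_of_mem hx]
    · have : Prod.mk x ⁻¹' s = ∅ :=
        Set.eq_empty_of_forall_notMem fun y hy => hx (hs_subset hy).1
      rw [this, measureReal_empty, zero_smul, Set.indicator_of_notMem hx]
  rw [Measure.volume_eq_prod, setIntegral_comp_fst hs_closed.measurableSet hg_int,
    funext h_slice, integral_indicator measurableSet_Icc, integral_Icc_eq_integral_Ioc,
    intervalIntegral.integral_of_le zero_le_one]

lemma setIntegral_simplex_two {g : ℝ → E} (hg : ContinuousOn g (Set.Icc 0 1)) :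
    ∫ s in {s : Fin 2 → ℝ | (∀ i, 0 ≤ s i) ∧ ∑ i, s i ≤ 1}, g (s 0) =
      ∫ t in (0 : ℝ)..1, (1 - t) • g t := by
  rw [← setIntegral_triangle_comp_fst hg,
    ← (volume_preserving_finTwoArrow ℝ).setIntegral_preimage_emb
      MeasurableEquiv.finTwoArrow.measurableEmbedding]
  simp [Fin.forall_fin_two, and_assoc]

lemma divDiff_two_eq_integral {f : ℝ → E} (hf : ContDiff ℝ 2 f) (a b : ℝ) :
    divDiff f 2 ![b, a, b] =
      ∫ t in (0 : ℝ)..1, (1 - t) • iteratedDeriv 2 f (b + t * (a - b)) := by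
  have : Continuous (iteratedDeriv 2 f) := hf.continuous_iteratedDeriv 2 le_rfl
  rw [← setIntegral_simplex_two (g := fun t => iteratedDeriv 2 f (b + t * (a - b))) (by fun_prop),
    divDiff]
  congr! 3 with s
  simp only [Fin.sum_univ_two, cons_val_zero, Fin.succ_zero_eq_one, Fin.succ_one_eq_two,
    cons_val_one, cons_val]
  ring

lemma dslope_eq_integral {f : ℝ → E} (hf : ContDiff ℝ 1 f) (a b : ℝ) :
    dslope f b a = ∫ t in (0 : ℝ)..1, deriv f (b + t * (a - b)) := by
  obtain rfl | h := eq_or_ne a b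
  · simp
  have : Continuous (deriv f) := hf.continuous_deriv le_rfl
  have h_ftc := intervalIntegral.integral_unitInterval_deriv_eq_sub (z₀ := b) (z₁ := a - b)
    (f := f) (f' := deriv f) (by fun_prop)
    fun t _ => (hf.differentiable one_ne_zero _).hasDerivAt
  rw [dslope_of_ne f h, slope_def_module, ← add_sub_cancel b a, ← h_ftc, add_sub_cancel, smul_smul,
    inv_mul_cancel₀ (sub_ne_zero.2 h), one_smul]
  rfl

lemma divDiff_add_divDiff_swap {f : ℝ → E} (hf : ContDiff ℝ 2 f) (a b : ℝ) :
    divDiff f 2 ![b, a, b] + divDiff f 2 ![a, b, a] = dslope (deriv f) a b := by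
  have : Continuous (iteratedDeriv 2 f) := hf.continuous_iteratedDeriv 2 le_rfl
  have h_reflect : ∫ t in (0 : ℝ)..1, (1 - t) • iteratedDeriv 2 f (a + t * (b - a)) =
      ∫ t in (0 : ℝ)..1, t • iteratedDeriv 2 f (b + t * (a - b)) := by
    have h_sub := intervalIntegral.integral_comp_sub_left (a := 0) (b := 1)
      (fun t : ℝ => t • iteratedDeriv 2 f (b + t * (a - b))) 1
    rw [sub_self, sub_zero] at h_sub
    rw [← h_sub]
    congr! 4 with t
    ring
  rw [divDiff_two_eq_integral hf, divDiff_two_eq_integral hf, h_reflect, dslope_comm,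
    dslope_eq_integral hf.deriv',
    ← intervalIntegral.integral_add (Continuous.intervalIntegrable (by fun_prop) _ _)
      (Continuous.intervalIntegrable (by fun_prop) _ _)]
  simp_rw [← add_smul, sub_add_cancel, one_smul, iteratedDeriv_succ, iteratedDeriv_zero]

end DividedDifferences

section FunctionalCalculus
open Filter
open scoped InnerProductSpace Topology

lemma mem_spectrum_of_apply_eq_smul {R S E : Type*} [CommSemiring R] [Ring S]
    [AddCommGroup E] [TopologicalSpace E] [IsTopologicalAddGroup E] [Module S E] [Module R E]
    [SMulCommClass S R E] [SMul R S] [IsScalarTower R S E] [ContinuousConstSMul R E]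
    {T : E →L[S] E} {m : R} {w : E} (hw₀ : w ≠ 0) (hw : T w = m • w) :
    m ∈ spectrum R T := by
  rintro ⟨U, hU⟩
  have hUw : U.1 w = 0 := by simp [hU, hw]
  exact hw₀ <| calc
    w = (U⁻¹.1 * U.1) w := by simp
    _ = 0 := by rw [mul_apply_eq_comp, hUw, map_zero]

lemma norm_inner_apply_comm {𝕜 H : Type*} [RCLike 𝕜] [NormedAddCommGroup H]
    [InnerProductSpace 𝕜 H] [CompleteSpace H] {T : H →L[𝕜] H} (hT : IsSelfAdjoint T) (x y : H) :
    ‖⟪x, T y⟫_𝕜‖ = ‖⟪y, T x⟫_𝕜‖ := by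
  rw [norm_inner_symm, hT.isSymmetric.apply_clm]

lemma inner_apply_mul_inner_apply_swap {𝕜 H : Type*} [RCLike 𝕜] [NormedAddCommGroup H]
    [InnerProductSpace 𝕜 H] [CompleteSpace H] {T : H →L[𝕜] H} (hT : IsSelfAdjoint T) (x y : H) :
    ⟪x, T y⟫_𝕜 * ⟪y, T x⟫_𝕜 = (‖⟪x, T y⟫_𝕜‖ ^ 2 : ℝ) := by
  rw [← inner_conj_symm y, hT.isSymmetric.apply_clm, RCLike.mul_conj, RCLike.ofReal_pow]

variable {H : Type*} [NormedAddCommGroup H] [InnerProductSpace ℂ H] [CompleteSpace H]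

lemma cfc_apply_eq_smul {T : H →L[ℂ] H} (hT : IsSelfAdjoint T) {f : ℝ → ℝ}
    (hf : ContinuousOn f (spectrum ℝ T)) {m : ℝ} {w : H} (hw : T w = m • w) :
    cfc f T w = f m • w := by
  obtain rfl | hw₀ := eq_or_ne w 0
  · simp
  have hm := mem_spectrum_of_apply_eq_smul hw₀ hw
  suffices ∀ g : C(spectrum ℝ T, ℝ), cfcHom hT g w = g ⟨m, hm⟩ • w by
    rw [cfc_apply f T hT hf, this]
    rfl
  intro g
  induction g using ContinuousMap.induction_on_of_compact with
  | const r =>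
    have : cfcHom hT (.const _ r) = algebraMap ℝ (H →L[ℂ] H) r := (cfcHom hT).commutes r
    rw [this, Algebra.algebraMap_eq_smul_one]
    rfl
  | id => rw [cfcHom_id, hw]; rfl
  | star_id => rw [star_trivial, cfcHom_id, hw]; rfl
  | add g₁ g₂ h₁ h₂ => simp [h₁, h₂, add_smul]
  | mul g₁ g₂ h₁ h₂ =>
    rw [map_mul, mul_apply_eq_comp, h₂, ContinuousLinearMap.map_smul_of_tower, h₁, smul_smul,
      mul_comm]
    rfl
  | frequently g hg =>
    have h_closed : IsClosed {g : C(spectrum ℝ T, ℝ) | cfcHom hT g w = g ⟨m, hm⟩ • w} :=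
      isClosed_eq ((cfcHom_continuous hT).clm_apply continuous_const)
        ((continuous_eval_const _).fun_smul continuous_const)
    exact h_closed.closure_subset (mem_closure_iff_frequently.2 hg)

lemma cfc_sub_cfc_apply {S T : H →L[ℂ] H} (hS : IsSelfAdjoint S) (hT : IsSelfAdjoint T) {f : ℝ → ℝ}
    (hf : Continuous f) {m : ℝ} (hfm : DifferentiableAt ℝ f m) {w : H} (hw : T w = m • w) :
    (cfc f S - cfc f T) w = cfc (dslope f m) S ((S - T) w) := by
  have h_cont := continuous_dslope hf hfm
  have h_factor : cfc f S - algebraMap ℝ _ (f m) = cfc (dslope f m) S * (S - algebraMap ℝ _ m) := by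
    have h_id : S - algebraMap ℝ _ m = cfc (fun x => x - m) S := by
      rw [cfc_sub .., cfc_id' ℝ S, cfc_const m S]
    rw [h_id, ← cfc_mul .., ← cfc_const (f m) S, ← cfc_sub ..]
    congr! 2
    rw [mul_comm, ← smul_eq_mul, sub_smul_dslope]
  calc (cfc f S - cfc f T) w
      = (cfc f S - algebraMap ℝ _ (f m)) w := by
        simp [cfc_apply_eq_smul hT hf.continuousOn hw, Algebra.algebraMap_eq_smul_one]
    _ = cfc (dslope f m) S ((S - T) w) := by
        rw [h_factor, mul_apply_eq_comp]
        simp [hw, Algebra.algebraMap_eq_smul_one]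

lemma continuousOn_cfc_isSelfAdjoint {f : ℝ → ℝ} (hf : Continuous f) :
    ContinuousOn (cfc f) {T : H →L[ℂ] H | IsSelfAdjoint T} :=
  continuousOn_id.cfc_of_mem_nhdsSet f (s := Set.univ) univ_mem (fun _ h => h) hf.continuousOn

lemma hasDerivAt_cfc_apply {P : ℝ → H →L[ℂ] H} {P' : H →L[ℂ] H} {v : ℝ}
    (hP : ∀ u, IsSelfAdjoint (P u)) (hP' : HasDerivAt P P' v) {f : ℝ → ℝ} (hf : Continuous f)
    {m : ℝ} (hfm : DifferentiableAt ℝ f m) {w : H} (hw : P v w = m • w) :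
    HasDerivAt (fun u => cfc f (P u) w) (cfc (dslope f m) (P v) (P' w)) v := by
  have h_slope (u : ℝ) : slope (fun u => cfc f (P u) w) v u =
      cfc (dslope f m) (P u) (slope P v u w) := by
    simp only [slope_def_module, _root_.smul_apply]
    rw [← _root_.sub_apply, cfc_sub_cfc_apply (hP u) (hP v) hf hfm hw,
      ContinuousLinearMap.map_smul_of_tower]
  have h_cfc : Tendsto (fun u => cfc (dslope f m) (P u)) (𝓝[≠] v) (𝓝 (cfc (dslope f m) (P v))) :=
    (continuousOn_cfc_isSelfAdjoint (continuous_dslope hf hfm) _ (hP v)).tendsto.comp <|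
      tendsto_nhdsWithin_iff.2 ⟨hP'.continuousAt.mono_left nhdsWithin_le_nhds, .of_forall hP⟩
  have h_slope_P : Tendsto (fun u => slope P v u w) (𝓝[≠] v) (𝓝 (P' w)) :=
    ((ContinuousLinearMap.apply ℂ H w).continuous.tendsto P').comp
      (hasDerivAt_iff_tendsto_slope.1 hP')
  rw [hasDerivAt_iff_tendsto_slope, tendsto_congr h_slope]
  exact (isBoundedBilinearMap_apply.continuous.tendsto _).comp (h_cfc.prodMk_nhds h_slope_P)

variable {ι : Type*} [Fintype ι]

lemma inner_cfc_apply_eq_smul {T : H →L[ℂ] H} (hT : IsSelfAdjoint T) {f : ℝ → ℝ}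
    (hf : ContinuousOn f (spectrum ℝ T)) {m : ℝ} {w : H} (hw : T w = m • w) (x : H) :
    ⟪w, cfc f T x⟫_ℂ = f m • ⟪w, x⟫_ℂ := by
  have : IsSelfAdjoint (cfc f T) := cfc_predicate f T
  rw [← this.isSymmetric.apply_clm, cfc_apply_eq_smul hT hf hw, inner_smul_left_eq_smul]

lemma hasDerivAt_trace_mul_cfc {P : ℝ → H →L[ℂ] H} {P' : H →L[ℂ] H} {v : ℝ}
    (hP : ∀ u, IsSelfAdjoint (P u)) (hP' : HasDerivAt P P' v) {f : ℝ → ℝ}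
    (hf : Differentiable ℝ f) (B : H →L[ℂ] H) (b : OrthonormalBasis ι ℂ H) {m : ι → ℝ}
    (hb : ∀ i, P v (b i) = m i • b i) :
    HasDerivAt (fun u => LinearMap.trace ℂ H (B * cfc f (P u)).toLinearMap)
      (∑ i, ∑ j, ⟪b i, B (b j)⟫_ℂ * ⟪b j, P' (b i)⟫_ℂ * dslope f (m i) (m j)) v := by
  have h_expand (i : ι) : ⟪b i, B (cfc (dslope f (m i)) (P v) (P' (b i)))⟫_ℂ =
      ∑ j, ⟪b i, B (b j)⟫_ℂ * ⟪b j, P' (b i)⟫_ℂ * dslope f (m i) (m j) := by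
    nth_rw 1 [← b.sum_repr' (cfc (dslope f (m i)) (P v) (P' (b i)))]
    simp_rw [map_sum, map_smul, inner_sum, inner_smul_right,
      inner_cfc_apply_eq_smul (hP v) (continuous_dslope hf.continuous (hf _)).continuousOn (hb _)]
    exact Finset.sum_congr rfl fun j _ => by rw [Complex.real_smul]; ring
  simp_rw [LinearMap.trace_eq_sum_inner _ b, ← h_expand]
  refine HasDerivAt.fun_sum fun i _ => ?_
  exact (innerSL ℂ (b i) ∘L B).restrictScalars ℝ |>.hasFDerivAt.comp_hasDerivAt v
    (hasDerivAt_cfc_apply hP hP' hf.continuous (hf _) (hb i))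

lemma hasDerivAt_trace_cfc [FiniteDimensional ℂ H] {P : ℝ → H →L[ℂ] H} {P' : H →L[ℂ] H} {v : ℝ}
    (hP : ∀ u, IsSelfAdjoint (P u)) (hP' : HasDerivAt P P' v) {f : ℝ → ℝ} (hf : ContDiff ℝ 1 f) :
    HasDerivAt (fun u => LinearMap.trace ℂ H (cfc f (P u)).toLinearMap)
      (LinearMap.trace ℂ H (P' * cfc (deriv f) (P v)).toLinearMap) v := by
  let b := (hP v).isSymmetric.eigenvectorBasis rfl
  let m := (hP v).isSymmetric.eigenvalues rfl
  have hb (i) : P v (b i) = m i • b i := (hP v).isSymmetric.apply_eigenvectorBasis rfl i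
  have h_trace : LinearMap.trace ℂ H (P' * cfc (deriv f) (P v)).toLinearMap =
      ∑ i, ∑ j, ⟪b i, (1 : H →L[ℂ] H) (b j)⟫_ℂ * ⟪b j, P' (b i)⟫_ℂ * dslope f (m i) (m j) := by
    rw [LinearMap.trace_eq_sum_inner _ b]
    refine Finset.sum_congr rfl fun i _ => ?_
    classical
    simp only [ContinuousLinearMap.toLinearMap_mul, Module.End.mul_apply,
      ContinuousLinearMap.coe_coe, ContinuousLinearMap.map_smul_of_tower,
      cfc_apply_eq_smul (hP v) (hf.continuous_deriv le_rfl).continuousOn (hb i),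
      inner_smul_right_eq_smul, Complex.real_smul, one_apply_eq_self,
      orthonormal_iff_ite.1 b.orthonormal, ite_mul, one_mul, zero_mul, Finset.sum_ite_eq,
      Finset.mem_univ, ↓reduceIte, dslope_same]
    ring
  rw [h_trace]
  simpa using hasDerivAt_trace_mul_cfc hP hP' (hf.differentiable one_ne_zero) 1 b hb

end FunctionalCalculus

section Matrix
open scoped InnerProductSpace

variable {N : Type*} [Fintype N] [DecidableEq N]

lemma isSelfAdjoint_toEuclideanCLM {𝕜 : Type*} [RCLike 𝕜] {M : Matrix N N 𝕜}
    (hM : M.IsHermitian) : IsSelfAdjoint (toEuclideanCLM (𝕜 := 𝕜) M) :=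
  hM.isSelfAdjoint.map _

lemma toEuclideanCLM_eigenvectorBasis {𝕜 : Type*} [RCLike 𝕜] {M : Matrix N N 𝕜}
    (hM : M.IsHermitian) (i : N) :
    toEuclideanCLM (𝕜 := 𝕜) M (hM.eigenvectorBasis i) =
      hM.eigenvalues i • hM.eigenvectorBasis i :=
  WithLp.ofLp_injective 2 (hM.mulVec_eigenvectorBasis i)

lemma trFun_eq_re_trace_cfc {M : Matrix N N ℂ} (hM : M.IsHermitian) {f : ℝ → ℝ}
    (hf : Continuous f) :
    trFun f M = (LinearMap.trace ℂ (EuclideanSpace ℂ N)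
      (cfc f (toEuclideanCLM (𝕜 := ℂ) M)).toLinearMap).re := by
  rw [trFun, dif_pos hM, LinearMap.trace_eq_sum_inner _ hM.eigenvectorBasis]
  simp [cfc_apply_eq_smul (isSelfAdjoint_toEuclideanCLM hM) hf.continuousOn
    (toEuclideanCLM_eigenvectorBasis hM _), inner_smul_right_eq_smul]

lemma isHermitian_add_ofReal_smul {N : Type*} {D A : Matrix N N ℂ} (hD : D.IsHermitian)
    (hA : A.IsHermitian) (u : ℝ) : (D + (u : ℂ) • A).IsHermitian :=
  hD.add (hA.smul (Complex.conj_ofReal u))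

lemma hasDerivAt_toEuclideanCLM_add_smul (D A : Matrix N N ℂ) (v : ℝ) :
    HasDerivAt (fun u : ℝ => toEuclideanCLM (n := N) (𝕜 := ℂ) (D + (u : ℂ) • A))
      (toEuclideanCLM (n := N) (𝕜 := ℂ) A) v := by
  simp_rw [map_add, map_smul]
  simpa only [one_smul, Complex.ofReal_one, id] using
    ((hasDerivAt_id v).ofReal_comp.smul_const (toEuclideanCLM (n := N) (𝕜 := ℂ) A)).const_add _

variable {D A : Matrix N N ℂ}

lemma hasDerivAt_trFun (hD : D.IsHermitian) (hA : A.IsHermitian) {f : ℝ → ℝ}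
    (hf : ContDiff ℝ 1 f) (v : ℝ) :
    HasDerivAt (fun u : ℝ => trFun f (D + (u : ℂ) • A))
      (LinearMap.trace ℂ (EuclideanSpace ℂ N) (toEuclideanCLM (𝕜 := ℂ) A *
        cfc (deriv f) (toEuclideanCLM (𝕜 := ℂ) (D + (v : ℂ) • A))).toLinearMap).re v := by
  have hP (u : ℝ) := isHermitian_add_ofReal_smul hD hA u
  simp_rw [trFun_eq_re_trace_cfc (hP _) hf.continuous]
  exact Complex.reCLM.hasFDerivAt.comp_hasDerivAt v <| hasDerivAt_trace_cfc
    (fun u => isSelfAdjoint_toEuclideanCLM (hP u)) (hasDerivAt_toEuclideanCLM_add_smul D A v) hf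

lemma iteratedDeriv_two_trFun (hD : D.IsHermitian) (hA : A.IsHermitian) {f : ℝ → ℝ}
    (hf : ContDiff ℝ 1 f) (hf' : Differentiable ℝ (deriv f)) :
    iteratedDeriv 2 (fun u : ℝ => trFun f (D + (u : ℂ) • A)) 0 =
      ∑ i, ∑ j, ‖⟪hD.eigenvectorBasis i,
        toEuclideanCLM (𝕜 := ℂ) A (hD.eigenvectorBasis j)⟫_ℂ‖ ^ 2 *
        dslope (deriv f) (hD.eigenvalues i) (hD.eigenvalues j) := by
  let T (M : Matrix N N ℂ) := toEuclideanCLM (𝕜 := ℂ) M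
  have h_second : HasDerivAt (fun v : ℝ => LinearMap.trace ℂ (EuclideanSpace ℂ N)
        (T A * cfc (deriv f) (T (D + (v : ℂ) • A))).toLinearMap)
      (∑ i, ∑ j, ⟪hD.eigenvectorBasis i, T A (hD.eigenvectorBasis j)⟫_ℂ *
        ⟪hD.eigenvectorBasis j, T A (hD.eigenvectorBasis i)⟫_ℂ *
        dslope (deriv f) (hD.eigenvalues i) (hD.eigenvalues j)) 0 :=
    hasDerivAt_trace_mul_cfc
      (fun u => isSelfAdjoint_toEuclideanCLM (isHermitian_add_ofReal_smul hD hA u))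
      (hasDerivAt_toEuclideanCLM_add_smul D A 0) hf' (T A) hD.eigenvectorBasis
      fun i => by simpa using toEuclideanCLM_eigenvectorBasis hD i
  rw [iteratedDeriv_succ, iteratedDeriv_one, funext fun v => (hasDerivAt_trFun hD hA hf v).deriv]
  refine (Complex.reCLM.hasFDerivAt.comp_hasDerivAt 0 h_second).deriv.trans ?_
  simp only [T, inner_apply_mul_inner_apply_swap (isSelfAdjoint_toEuclideanCLM hA),
    RCLike.ofReal_eq_complex_ofReal, ← Complex.ofReal_mul, ← Complex.ofReal_sum,
    Complex.reCLM_apply, Complex.ofReal_re]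

end Matrix

lemma sum_sum_mul_add_swap {ι R : Type*} [Fintype ι] [NonAssocSemiring R] {a : ι → ι → R}
    (ha : ∀ i j, a i j = a j i) (g : ι → ι → R) :
    ∑ i, ∑ j, a i j * (g i j + g j i) = 2 * ∑ i, ∑ j, a i j * g i j := by
  simp_rw [mul_add, Finset.sum_add_distrib, two_mul]
  congr 1
  rw [Finset.sum_comm]
  simp_rw [ha]

theorem spectral_action_second_derivative_general {N : Type*} [Fintype N] [DecidableEq N]
    (D A : Matrix N N ℂ) (hD : D.IsHermitian) (hA : A.IsHermitian)
    (f : ℝ → ℝ) (hf : ContDiff ℝ 2 f) :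
    iteratedDeriv 2 (fun u : ℝ => trFun f (D + (u : ℂ) • A)) 0 =
        2 * ∑ i, ∑ j,
          ((inner (𝕜 := ℂ) (hD.eigenvectorBasis i)
              (Matrix.toEuclideanCLM (𝕜 := ℂ) A (hD.eigenvectorBasis j))) *
            (inner (𝕜 := ℂ) (hD.eigenvectorBasis j)
              (Matrix.toEuclideanCLM (𝕜 := ℂ) A (hD.eigenvectorBasis i)))).re *
            divDiff f 2 ![hD.eigenvalues j, hD.eigenvalues i, hD.eigenvalues j] ∧
      iteratedDeriv 2 (fun u : ℝ => trFun f (D + (u : ℂ) • A)) 0 =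
        ∑ i, ∑ j,
          ‖inner (𝕜 := ℂ) (hD.eigenvectorBasis i)
              (Matrix.toEuclideanCLM (𝕜 := ℂ) A (hD.eigenvectorBasis j))‖ ^ 2 *
            (if hD.eigenvalues i = hD.eigenvalues j then
              iteratedDeriv 2 f (hD.eigenvalues i)
            else
              (deriv f (hD.eigenvalues i) - deriv f (hD.eigenvalues j)) /
                (hD.eigenvalues i - hD.eigenvalues j)) := by
  rw [iteratedDeriv_two_trFun hD hA (hf.of_le one_le_two) (hf.deriv'.differentiable one_ne_zero)]
  simp_rw [inner_apply_mul_inner_apply_swap (isSelfAdjoint_toEuclideanCLM hA),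
    RCLike.ofReal_eq_complex_ofReal, Complex.ofReal_re]
  have h_symm (i j : N) := congrArg (· ^ 2) <| norm_inner_apply_comm
    (isSelfAdjoint_toEuclideanCLM hA) (hD.eigenvectorBasis i) (hD.eigenvectorBasis j)
  constructor
  · rw [← sum_sum_mul_add_swap h_symm]
    simp_rw [divDiff_add_divDiff_swap hf]
  · simp_rw [dslope_eq_ite, iteratedDeriv_succ, iteratedDeriv_zero]

/-- Second Gâteaux derivative of the spectral action `S(A) = Tr f(D+A)` at `0`:
`S''(0)(A,A) = 2 ∑_{i,j} A_{ij}A_{ji} f[λⱼ,λᵢ,λⱼ] = ∑_{i,j} |A_{ij}|² f'[λᵢ,λⱼ]`,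
where `λᵢ` are the eigenvalues of `D`, `A_{ij}` the matrix coefficients of `A`
in an orthonormal eigenbasis of `D`, and `f'[λᵢ,λⱼ]` the first divided
difference of `f'` (equal to `f''(λᵢ)` on coinciding points). -/
theorem spectral_action_second_derivative {N : Type*} [Fintype N] [DecidableEq N]
    (D A : Matrix N N ℂ) (hD : D.IsHermitian) (hA : A.IsHermitian)
    (f : ℝ → ℝ) (hf : ContDiff ℝ (⊤ : ℕ∞) f) :
    iteratedDeriv 2 (fun u : ℝ => trFun f (D + (u : ℂ) • A)) 0 =
        2 * ∑ i, ∑ j,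
          ((inner (𝕜 := ℂ) (hD.eigenvectorBasis i)
              (Matrix.toEuclideanCLM (𝕜 := ℂ) A (hD.eigenvectorBasis j))) *
            (inner (𝕜 := ℂ) (hD.eigenvectorBasis j)
              (Matrix.toEuclideanCLM (𝕜 := ℂ) A (hD.eigenvectorBasis i)))).re *
            divDiff f 2 ![hD.eigenvalues j, hD.eigenvalues i, hD.eigenvalues j] ∧
      iteratedDeriv 2 (fun u : ℝ => trFun f (D + (u : ℂ) • A)) 0 =
        ∑ i, ∑ j,
          ‖inner (𝕜 := ℂ) (hD.eigenvectorBasis i)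
              (Matrix.toEuclideanCLM (𝕜 := ℂ) A (hD.eigenvectorBasis j))‖ ^ 2 *
            (if hD.eigenvalues i = hD.eigenvalues j then
              iteratedDeriv 2 f (hD.eigenvalues i)
            else
              (deriv f (hD.eigenvalues i) - deriv f (hD.eigenvalues j)) /
                (hD.eigenvalues i - hD.eigenvalues j)) :=
  spectral_action_second_derivative_general D A hD hA f <|
    (contDiff_infty.1 hf 2)
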